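/- Suppose the Ellis enveloping semigroup E(Ω,φ) is metrizable (the semicascade is ordinary). Then every ergodic sequence (T_k) of operators from the convex hull of {V^n : n ≥ 0} converges in the weak* operator topology if and only if for every ω ∈ Ω the orbit closure of ω contains exactly one minimal set. -/

import Mathlib

open MeasureTheory Filter Topology

/-- The pairing `⟨f, μ⟩ = ∫ f dμ` of a function with a finite signed Borel measure,
defined via the Jordan decomposition of the signed measure. -/
noncomputable def spair {Ω : Type*} [MeasurableSpace Ω] (f : Ω → ℝ) (μ : SignedMeasure Ω) : ℝ :=
  (∫ ω, f ω ∂μ.toJordanDecomposition.posPart) - (∫ ω, f ω ∂μ.toJordanDecomposition.negPart)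

/-- The weak* topology on the space `X*` of finite signed Borel measures, i.e. the topology
of convergence of the pairings with all continuous functions `x ∈ C(Ω, ℝ)`. With this topology
on the codomain, the product topology on `SignedMeasure Ω → SignedMeasure Ω` is precisely the
weak* operator topology (pointwise convergence with `X*` in its weak* topology). -/
noncomputable instance weakStarTopology {Ω : Type*} [TopologicalSpace Ω] [MeasurableSpace Ω] :
    TopologicalSpace (SignedMeasure Ω) :=
  TopologicalSpace.induced (fun μ => fun x : C(Ω, ℝ) => spair (⇑x) μ) inferInstance

/-- The operator `V : X* → X*`, pushforward by `φ`: `(Vμ)(e) = μ(φ⁻¹ e)`. -/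
noncomputable def Vop {Ω : Type*} [MeasurableSpace Ω] (φ : Ω → Ω) :
    SignedMeasure Ω → SignedMeasure Ω :=
  fun μ => μ.map φ

/-- The Dirac measure at `ω`, as a signed measure. -/
noncomputable def diracSM {Ω : Type*} [MeasurableSpace Ω] (ω : Ω) : SignedMeasure Ω :=
  (Measure.dirac ω).toSignedMeasure

/-- `Γ(Ω,φ)`: the closure of `{Vⁿ : n ≥ 0}` in the weak* operator topology. -/
def GammaSG {Ω : Type*} [TopologicalSpace Ω] [MeasurableSpace Ω] (φ : Ω → Ω) :
    Set (SignedMeasure Ω → SignedMeasure Ω) :=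
  closure (Set.range fun n : ℕ => (Vop φ)^[n])

/-- `G(Ω,φ)`: the closure of the convex hull of `{Vⁿ : n ≥ 0}` in the weak* operator topology. -/
def GSG {Ω : Type*} [TopologicalSpace Ω] [MeasurableSpace Ω] (φ : Ω → Ω) :
    Set (SignedMeasure Ω → SignedMeasure Ω) :=
  closure (convexHull ℝ (Set.range fun n : ℕ => (Vop φ)^[n]))

/-- The kernel `L = {Q ∈ G(Ω,φ) : V ∘ Q = Q}` of the semigroup `G(Ω,φ)`. -/
def Lker {Ω : Type*} [TopologicalSpace Ω] [MeasurableSpace Ω] (φ : Ω → Ω) :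
    Set (SignedMeasure Ω → SignedMeasure Ω) :=
  {Q ∈ GSG φ | Vop φ ∘ Q = Q}

/-- The Ellis enveloping semigroup `E(Ω,φ)`: the closure of the iterates `{φⁿ : n ≥ 0}`
in the product topology (pointwise convergence) on `Ω → Ω`. -/
def EllisE {Ω : Type*} [TopologicalSpace Ω] (φ : Ω → Ω) : Set (Ω → Ω) :=
  closure (Set.range fun n : ℕ => φ^[n])

/-- `E_b(Ω,φ)`: the smallest set of self-maps of `Ω` containing the iterates `{φⁿ : n ≥ 0}`
and sequentially closed under pointwise convergence. -/
inductive Eb {Ω : Type*} [TopologicalSpace Ω] (φ : Ω → Ω) : (Ω → Ω) → Prop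
  | iterate (n : ℕ) : Eb φ φ^[n]
  | lim (p : ℕ → Ω → Ω) (q : Ω → Ω) (hp : ∀ k, Eb φ (p k))
      (hq : ∀ ω, Tendsto (fun k => p k ω) atTop (𝓝 (q ω))) : Eb φ q

/-- `E₁(Ω,φ)`: the set of pointwise limits of sequences of iterates `φ^{n_k}`. -/
def E1SG {Ω : Type*} [TopologicalSpace Ω] (φ : Ω → Ω) : Set (Ω → Ω) :=
  {p | ∃ n : ℕ → ℕ, ∀ ω, Tendsto (fun k => φ^[n k] ω) atTop (𝓝 (p ω))}

/-- An operator `P ∈ Γ(Ω,φ)` with `p = πP` is regular if `p` is Borel measurable and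
`(Pμ)(e) = μ(p⁻¹ e)` for every Borel probability measure `μ` and Borel set `e`. -/
def RegularOperator {Ω : Type*} [TopologicalSpace Ω] [MeasurableSpace Ω]
    (P : SignedMeasure Ω → SignedMeasure Ω) (p : Ω → Ω) : Prop :=
  Measurable p ∧ ∀ (μ : Measure Ω) [IsProbabilityMeasure μ],
    ∀ e : Set Ω, MeasurableSet e → P μ.toSignedMeasure e = (μ (p ⁻¹' e)).toReal

/-- A minimal set of the semicascade `(Ω,φ)`: a nonempty closed `φ`-invariant set containing
no proper nonempty closed `φ`-invariant subset. -/
def IsMinimalSet {Ω : Type*} [TopologicalSpace Ω] (φ : Ω → Ω) (m : Set Ω) : Prop :=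
  m.Nonempty ∧ IsClosed m ∧ Set.MapsTo φ m m ∧
    ∀ m' ⊆ m, m'.Nonempty → IsClosed m' → Set.MapsTo φ m' m' → m' = m

/-- The orbit closure of a point `ω`: the closure of the trajectory `{φⁿ ω : n ≥ 0}`. -/
def orbitClosure {Ω : Type*} [TopologicalSpace Ω] (φ : Ω → Ω) (ω : Ω) : Set Ω :=
  closure (Set.range fun n : ℕ => φ^[n] ω)

/-- A `φ`-ergodic measure: a `φ`-invariant Borel probability measure `μ` such that
`μ(e) ∈ {0,1}` for every Borel set `e` with `φ⁻¹ e = e`. -/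
def IsErgodicMeasure {Ω : Type*} [MeasurableSpace Ω] (φ : Ω → Ω) (μ : Measure Ω) : Prop :=
  IsProbabilityMeasure μ ∧ (∀ e : Set Ω, MeasurableSet e → μ (φ ⁻¹' e) = μ e) ∧
    (∀ e : Set Ω, MeasurableSet e → φ ⁻¹' e = e → μ e = 0 ∨ μ e = 1)

/-- The support of a Borel measure: the smallest closed set of full measure
(the intersection of all closed sets of full measure). -/
def msupp {Ω : Type*} [TopologicalSpace Ω] [MeasurableSpace Ω] (μ : Measure Ω) : Set Ω :=
  ⋂₀ {s : Set Ω | IsClosed s ∧ μ sᶜ = 0}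

/-- The semicascade `(Ω,φ)` is tame: for every continuous `x` and every strictly increasing
sequence `n(1) < n(2) < ⋯`, the infimum over finitely supported real coefficients `a` with
`Σ|aₖ| = 1` of the sup-norms `‖Σₖ aₖ · (x ∘ φ^{n(k)})‖` is `0`. -/
def Tame {Ω : Type*} [TopologicalSpace Ω] [CompactSpace Ω] (φ : Ω → Ω)
    (hφ : Continuous φ) : Prop :=
  ∀ (x : C(Ω, ℝ)) (n : ℕ → ℕ), StrictMono n →
    sInf {r : ℝ | ∃ a : ℕ →₀ ℝ, (∑ k ∈ a.support, |a k|) = 1 ∧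
      r = ‖∑ k ∈ a.support, a k • x.comp ⟨φ^[n k], hφ.iterate (n k)⟩‖} = 0

/-- Points `a, b` are proximal: `inf_{n ≥ 0} d(φⁿ a, φⁿ b) = 0`. -/
def Proximal {Ω : Type*} [PseudoMetricSpace Ω] (φ : Ω → Ω) (a b : Ω) : Prop :=
  (⨅ n : ℕ, dist (φ^[n] a) (φ^[n] b)) = 0

variable {Ω : Type*} [TopologicalSpace Ω] [CompactSpace Ω] [TopologicalSpace.MetrizableSpace Ω]
  [Nonempty Ω] [MeasurableSpace Ω] [BorelSpace Ω]

/-! The averaging operators act on `C(Ω, ℝ)` as convex combinations `A k` of powers of the Koopman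
operator. Along an ultrafilter, `f ↦ A k f ω` converges to integration against an invariant
probability measure carried by the orbit closure of `ω`.

Metrizability of the Ellis semigroup makes `Ω` separable for the orbit metric
`sup_n d(φⁿ a, φⁿ b)`. Hence an invariant measure gives positive mass to a closed set `B` of small
orbit diameter. If the orbit closures of points of `B` meet a closed invariant set `m`, the orbit of
`B` shadows `m` during arbitrarily long windows, while the return times of `B` cannot avoid such
windows: so `B` is close to `m`. If the orbit closure of `ω` contains only one minimal set, the
limit measures are thus carried by it. By Baire's theorem two points of a minimal set have iterates
that are close in the orbit metric, so `A k f` is asymptotically constant there, and all limit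
measures coincide.

Conversely, if an orbit closure contains two minimal sets, Cesàro averages over longer and longer
windows that shadow them alternately form a divergent ergodic sequence. -/

section WindowAverage

variable {E F : Type*} [AddCommGroup E] [Module ℝ E] [AddCommGroup F] [Module ℝ F]

/-- A set of natural numbers is thick if it contains arbitrarily long intervals. -/
def IsThick (D : Set ℕ) : Prop :=
  ∀ N, ∃ n, ∀ j ≤ N, n + j ∈ D

/-- The Cesàro average of the sequence `u` over the window `[s, s + N)`. -/
noncomputable def windowAverage (u : ℕ → E) (N s : ℕ) : E :=
  (N : ℝ)⁻¹ • ∑ j ∈ Finset.range N, u (s + j)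

theorem map_windowAverage (ℓ : E →ₗ[ℝ] F) (u : ℕ → E) (N s : ℕ) :
    ℓ (windowAverage u N s) = windowAverage (ℓ ∘ u) N s := by
  simp only [windowAverage, map_smul, map_sum, Function.comp_apply]

theorem windowAverage_mem {C : Set E} (hC : Convex ℝ C) {u : ℕ → E} {N s : ℕ} (hN : N ≠ 0)
    (hu : ∀ j < N, u (s + j) ∈ C) : windowAverage u N s ∈ C := by
  rw [windowAverage, Finset.smul_sum]
  exact hC.sum_mem (fun _ _ ↦ by positivity) (by simp [hN]) fun j hj ↦
    hu j (Finset.mem_range.1 hj)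

theorem windowAverage_sub_windowAverage_succ (u : ℕ → E) (N s : ℕ) :
    windowAverage u N s - windowAverage (fun n ↦ u (n + 1)) N s =
      (N : ℝ)⁻¹ • (u s - u (s + N)) := by
  rw [windowAverage, windowAverage, ← smul_sub, ← Finset.sum_sub_distrib]
  exact congrArg _ (Finset.sum_range_sub' (fun j ↦ u (s + j)) N)

theorem tendsto_windowAverage_sub_windowAverage_succ {u : ℕ → ℝ} {C : ℝ} (hu : ∀ n, |u n| ≤ C)
    (s : ℕ → ℕ) :
    Tendsto (fun k ↦ windowAverage u (k + 1) (s k) -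
      windowAverage (fun n ↦ u (n + 1)) (k + 1) (s k)) atTop (𝓝 0) := by
  have h_bound : Tendsto (fun k : ℕ ↦ ((k + 1 : ℕ) : ℝ)⁻¹ * (C + C)) atTop (𝓝 0) := by
    simpa using ((tendsto_add_atTop_iff_nat 1).2
      (tendsto_inv_atTop_nhds_zero_nat (𝕜 := ℝ))).mul_const (C + C)
  refine squeeze_zero_norm (fun k ↦ ?_) h_bound
  rw [windowAverage_sub_windowAverage_succ, norm_smul, norm_inv, Real.norm_natCast]
  gcongr
  exact norm_sub_le_of_le (hu _) (hu _)

theorem le_of_isThick_of_tendsto_windowAverage {u : ℕ → ℝ} {a b : ℝ}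
    (ha : IsThick {n | u n ≤ a}) (hb : IsThick {n | b ≤ u n})
    (hu : ∀ s : ℕ → ℕ, ∃ l, Tendsto (fun k ↦ windowAverage u (k + 1) (s k)) atTop (𝓝 l)) :
    b ≤ a := by
  choose s hs using ha
  choose t ht using hb
  obtain ⟨l, hl⟩ := hu fun k ↦ if Even k then s k else t k
  have hla : l ≤ a := le_of_tendsto_of_frequently hl <| Nat.frequently_even.mono fun k hk ↦ by
    rw [if_pos hk]
    exact windowAverage_mem (convex_Iic a) k.succ_ne_zero fun j hj ↦ hs k j (Nat.le_of_lt_succ hj)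
  have hbl : b ≤ l := ge_of_tendsto_of_frequently hl <| Nat.frequently_odd.mono fun k hk ↦ by
    rw [if_neg (Nat.not_even_iff_odd.2 hk)]
    exact windowAverage_mem (convex_Ici b) k.succ_ne_zero fun j hj ↦ ht k j (Nat.le_of_lt_succ hj)
  exact hbl.trans hla

end WindowAverage

section Recurrence

theorem IsThick.mono {D D' : Set ℕ} (hD : IsThick D) (h : D ⊆ D') : IsThick D' :=
  fun N ↦ (hD N).imp fun _ hn j hj ↦ h (hn j hj)

theorem IsThick.exists_forall_sub_mem {D : Set ℕ} (hD : IsThick D) :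
    ∃ a : ℕ → ℕ, Monotone a ∧ ∀ i j, i < j → a j - a i ∈ D := by
  choose n hn using hD
  let a : ℕ → ℕ := fun k ↦ Nat.rec 0 (fun _ p ↦ n p + p) k
  have a_succ (k) : a (k + 1) = n (a k) + a k := rfl
  have ha : Monotone a := monotone_nat_of_le_succ fun k ↦ by rw [a_succ]; omega
  refine ⟨a, ha, fun i j hij ↦ ?_⟩
  obtain ⟨k, rfl⟩ := Nat.exists_eq_add_one_of_ne_zero (Nat.ne_zero_of_lt hij)
  have hik : a i ≤ a k := ha (Nat.le_of_lt_succ hij)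
  rw [a_succ, Nat.add_sub_assoc hik]
  exact hn _ _ (Nat.sub_le _ _)

theorem exists_nonempty_inter_preimage_iterate_of_isThick {X : Type*} [MeasurableSpace X]
    {φ : X → X} {ν : Measure X} [IsFiniteMeasure ν] (hν : MeasurePreserving φ ν ν) {B : Set X}
    (hB : MeasurableSet B) (hB₀ : ν B ≠ 0) {D : Set ℕ} (hD : IsThick D) :
    ∃ d ∈ D, (B ∩ φ^[d] ⁻¹' B).Nonempty := by
  by_contra! h_empty
  obtain ⟨a, ha, haD⟩ := hD.exists_forall_sub_mem
  have h_disjoint : Pairwise (Function.onFun Disjoint fun k ↦ φ^[a k] ⁻¹' B) := by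
    refine (pairwise_disjoint_on _).2 fun i j hij ↦ Set.disjoint_left.2 fun ω hi hj ↦ ?_
    refine (h_empty _ (haD i j hij)).le ⟨hi, ?_⟩
    rwa [Set.mem_preimage, ← Function.iterate_add_apply, Nat.sub_add_cancel (ha hij.le)]
  have h_finite := Measure.finite_const_le_meas_of_disjoint_iUnion ν (pos_iff_ne_zero.2 hB₀)
    (fun k ↦ (hν.iterate (a k)).measurable hB) h_disjoint (measure_ne_top _ _)
  simp only [(hν.iterate _).measure_preimage hB.nullMeasurableSet, le_refl] at h_finite
  exact Set.infinite_univ h_finite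

end Recurrence

section OrbitClosure

variable {X : Type*} [TopologicalSpace X] {φ : X → X} {ω y : X} {m : Set X}

theorem iterate_mem_orbitClosure (φ : X → X) (ω : X) (n : ℕ) : φ^[n] ω ∈ orbitClosure φ ω :=
  subset_closure ⟨n, rfl⟩

theorem mapsTo_orbitClosure (hφ : Continuous φ) (ω : X) :
    Set.MapsTo φ (orbitClosure φ ω) (orbitClosure φ ω) := by
  refine Set.MapsTo.closure ?_ hφ
  rintro _ ⟨n, rfl⟩
  exact ⟨n + 1, Function.iterate_succ_apply' φ n ω⟩

theorem orbitClosure_subset (hm : IsClosed m) (hφm : Set.MapsTo φ m m) (hω : ω ∈ m) :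
    orbitClosure φ ω ⊆ m :=
  closure_minimal (Set.range_subset_iff.2 fun n ↦ hφm.iterate n hω) hm

theorem isThick_setOf_iterate_mem (hφ : Continuous φ) (hy : y ∈ orbitClosure φ ω) {U : Set X}
    (hU : IsOpen U) (hyU : ∀ j, φ^[j] y ∈ U) : IsThick {n | φ^[n] ω ∈ U} := by
  intro N
  have hW : IsOpen (⋂ j ∈ Set.Iic N, φ^[j] ⁻¹' U) :=
    (Set.finite_Iic N).isOpen_biInter fun j _ ↦ hU.preimage (hφ.iterate j)
  obtain ⟨_, hn, n, rfl⟩ := mem_closure_iff.1 hy _ hW (Set.mem_iInter₂.2 fun j _ ↦ hyU j)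
  refine ⟨n, fun j hj ↦ ?_⟩
  rw [Set.mem_ofPred_eq, add_comm, Function.iterate_add_apply]
  exact Set.mem_iInter₂.1 hn j hj

theorem IsMinimalSet.orbitClosure_eq (hm : IsMinimalSet φ m) (hφ : Continuous φ) (hω : ω ∈ m) :
    orbitClosure φ ω = m :=
  hm.2.2.2 _ (orbitClosure_subset hm.2.1 hm.2.2.1 hω) ⟨ω, iterate_mem_orbitClosure φ ω 0⟩
    isClosed_closure (mapsTo_orbitClosure hφ ω)

theorem IsMinimalSet.disjoint_of_ne {m' : Set X} (hm : IsMinimalSet φ m) (hm' : IsMinimalSet φ m')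
    (hφ : Continuous φ) (hne : m ≠ m') : Disjoint m m' :=
  Set.disjoint_left.2 fun _ h h' ↦
    hne ((hm.orbitClosure_eq hφ h).symm.trans (hm'.orbitClosure_eq hφ h'))

theorem exists_isMinimalSet_subset [CompactSpace X] {F : Set X} (hF : IsClosed F)
    (hne : F.Nonempty) (hφF : Set.MapsTo φ F F) : ∃ m, IsMinimalSet φ m ∧ m ⊆ F := by
  let P : Set (Set X) := {s | s.Nonempty ∧ IsClosed s ∧ Set.MapsTo φ s s}
  have h_chain : ∀ c ⊆ P, IsChain (· ⊆ ·) c → c.Nonempty → ∃ lb ∈ P, ∀ s ∈ c, lb ⊆ s := by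
    intro c hc h_isChain h_nonempty
    have : Nonempty c := h_nonempty.to_subtype
    refine ⟨⋂₀ c, ⟨?_, isClosed_sInter fun s hs ↦ (hc hs).2.1, fun z hz s hs ↦
      (hc hs).2.2 (hz s hs)⟩, fun s hs ↦ Set.sInter_subset_of_mem hs⟩
    have h_directed : DirectedOn (· ⊇ ·) c := IsChain.directedOn h_isChain.symm
    exact IsCompact.nonempty_sInter_of_directed_nonempty_isCompact_isClosed h_directed
      (fun s hs ↦ (hc hs).1) (fun s hs ↦ (hc hs).2.1.isCompact) fun s hs ↦ (hc hs).2.1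
  obtain ⟨m, hmF, hm⟩ := zorn_superset_nonempty P h_chain F ⟨hne, hF, hφF⟩
  exact ⟨m, ⟨hm.prop.1, hm.prop.2.1, hm.prop.2.2, fun m' h_sub h_ne h_closed h_maps ↦
    hm.eq_of_subset ⟨h_ne, h_closed, h_maps⟩ h_sub⟩, hmF⟩

end OrbitClosure

section Pairing

variable {X : Type*} [MeasurableSpace X]

theorem Vop_toSignedMeasure_sub {φ : X → X} (hφ : Measurable φ) (p q : Measure X)
    [IsFiniteMeasure p] [IsFiniteMeasure q] :
    Vop φ (p.toSignedMeasure - q.toSignedMeasure) =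
      (p.map φ).toSignedMeasure - (q.map φ).toSignedMeasure := by
  ext e he
  rw [Vop, VectorMeasure.map_apply _ hφ he, Measure.toSignedMeasure_sub_apply (hφ he),
    Measure.toSignedMeasure_sub_apply he, map_measureReal_apply hφ he,
    map_measureReal_apply hφ he]

theorem Vop_diracSM {φ : X → X} (hφ : Measurable φ) (ω : X) :
    Vop φ (diracSM ω) = diracSM (φ ω) := by
  simpa [diracSM, Measure.map_dirac' hφ] using Vop_toSignedMeasure_sub hφ (Measure.dirac ω) 0

theorem exists_eq_toSignedMeasure_sub (μ : SignedMeasure X) :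
    ∃ p q : Measure X, ∃ (_ : IsFiniteMeasure p) (_ : IsFiniteMeasure q),
      μ = p.toSignedMeasure - q.toSignedMeasure :=
  ⟨_, _, inferInstance, inferInstance, μ.toSignedMeasure_toJordanDecomposition.symm⟩

theorem abs_spair_le {f : X → ℝ} {C : ℝ} (hf : ∀ ω, |f ω| ≤ C) (μ : SignedMeasure X) :
    |spair f μ| ≤ C * μ.toJordanDecomposition.posPart.real Set.univ +
      C * μ.toJordanDecomposition.negPart.real Set.univ := by
  have h_bound (p : Measure X) [IsFiniteMeasure p] : |∫ ω, f ω ∂p| ≤ C * p.real Set.univ :=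
    norm_integral_le_of_norm_le_const (f := f) (Eventually.of_forall hf)
  exact (abs_sub _ _).trans (add_le_add (h_bound _) (h_bound _))

theorem spair_smul (f : X → ℝ) (c : ℝ) (μ : SignedMeasure X) :
    spair f (c • μ) = c * spair f μ := by
  rw [spair, spair, SignedMeasure.toJordanDecomposition_smul_real]
  rcases le_or_gt 0 c with hc | hc
  · rw [JordanDecomposition.real_smul_posPart_nonneg _ _ hc,
      JordanDecomposition.real_smul_negPart_nonneg _ _ hc, integral_smul_nnreal_measure,
      integral_smul_nnreal_measure, NNReal.smul_def, NNReal.smul_def, Real.coe_toNNReal _ hc,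
      smul_eq_mul, smul_eq_mul, mul_sub]
  · rw [JordanDecomposition.real_smul_posPart_neg _ _ hc,
      JordanDecomposition.real_smul_negPart_neg _ _ hc, integral_smul_nnreal_measure,
      integral_smul_nnreal_measure, NNReal.smul_def, NNReal.smul_def,
      Real.coe_toNNReal _ (neg_nonneg.2 hc.le), smul_eq_mul, smul_eq_mul]
    ring

variable [TopologicalSpace X] [CompactSpace X] [BorelSpace X]

theorem integrable_continuousMap (f : C(X, ℝ)) (p : Measure X) [IsFiniteMeasure p] :
    Integrable f p :=
  f.continuous.integrable_of_hasCompactSupport (.of_compactSpace f)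

theorem spair_toSignedMeasure_sub (f : C(X, ℝ)) (p q : Measure X) [IsFiniteMeasure p]
    [IsFiniteMeasure q] :
    spair f (p.toSignedMeasure - q.toSignedMeasure) = ∫ ω, f ω ∂p - ∫ ω, f ω ∂q := by
  let j := (p.toSignedMeasure - q.toSignedMeasure).toJordanDecomposition
  have h_measure : j.posPart + q = p + j.negPart := by
    rw [← Measure.toSignedMeasure_eq_toSignedMeasure_iff, Measure.toSignedMeasure_add,
      Measure.toSignedMeasure_add, ← sub_eq_sub_iff_add_eq_add]
    exact SignedMeasure.toSignedMeasure_toJordanDecomposition _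
  rw [spair, sub_eq_sub_iff_add_eq_add,
    ← integral_add_measure (integrable_continuousMap f _) (integrable_continuousMap f _),
    ← integral_add_measure (integrable_continuousMap f _) (integrable_continuousMap f _)]
  exact congrArg (fun r ↦ ∫ ω, f ω ∂r) h_measure

theorem spair_toSignedMeasure (f : C(X, ℝ)) (p : Measure X) [IsFiniteMeasure p] :
    spair f p.toSignedMeasure = ∫ ω, f ω ∂p := by
  simpa using spair_toSignedMeasure_sub f p 0

theorem spair_diracSM (f : C(X, ℝ)) (ω : X) : spair f (diracSM ω) = f ω :=
  (spair_toSignedMeasure f _).trans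
    (integral_dirac' _ _ f.continuous.measurable.stronglyMeasurable)

theorem spair_Vop (f : C(X, ℝ)) (φ : C(X, X)) (μ : SignedMeasure X) :
    spair f (Vop φ μ) = spair (f.comp φ) μ := by
  obtain ⟨p, q, _, _, rfl⟩ := exists_eq_toSignedMeasure_sub μ
  have hφ : Measurable φ := φ.continuous.measurable
  have hf (r : Measure X) : AEStronglyMeasurable f r := f.continuous.aestronglyMeasurable
  rw [Vop_toSignedMeasure_sub hφ, spair_toSignedMeasure_sub, spair_toSignedMeasure_sub,
    integral_map hφ.aemeasurable (hf _), integral_map hφ.aemeasurable (hf _)]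
  rfl

theorem spair_add (f : C(X, ℝ)) (μ ν : SignedMeasure X) :
    spair f (μ + ν) = spair f μ + spair f ν := by
  obtain ⟨p, q, _, _, rfl⟩ := exists_eq_toSignedMeasure_sub μ
  obtain ⟨p', q', _, _, rfl⟩ := exists_eq_toSignedMeasure_sub ν
  have hf (r : Measure X) [IsFiniteMeasure r] : Integrable f r := integrable_continuousMap f r
  rw [sub_add_sub_comm, ← Measure.toSignedMeasure_add, ← Measure.toSignedMeasure_add]
  simp only [spair_toSignedMeasure_sub, integral_add_measure (hf _) (hf _)]
  ring

/-- The duality `⟨f, μ⟩ = ∫ f dμ` between `C(X, ℝ)` and signed measures as a bilinear map. -/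
noncomputable def pairing : C(X, ℝ) →ₗ[ℝ] SignedMeasure X →ₗ[ℝ] ℝ :=
  LinearMap.mk₂ ℝ (fun f μ ↦ spair f μ)
    (fun f g μ ↦ by
      simp only [spair, ContinuousMap.add_apply]
      rw [integral_add (integrable_continuousMap f _) (integrable_continuousMap g _),
        integral_add (integrable_continuousMap f _) (integrable_continuousMap g _)]
      ring)
    (fun c f μ ↦ by
      simp only [spair, ContinuousMap.smul_apply, smul_eq_mul, integral_const_mul]
      ring)
    spair_add (fun c f μ ↦ spair_smul f c μ)

@[simp]
theorem pairing_apply (f : C(X, ℝ)) (μ : SignedMeasure X) : pairing f μ = spair f μ :=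
  rfl

end Pairing

section Koopman

variable {X : Type*} [TopologicalSpace X] {φ : C(X, X)}

/-- The Koopman operator `f ↦ f ∘ φ`, as an element of the algebra of linear endomorphisms of
`C(X, ℝ)`. -/
def koopman (φ : C(X, X)) : Module.End ℝ C(X, ℝ) :=
  (ContinuousMap.compRightAlgHom ℝ ℝ φ).toLinearMap

@[simp]
theorem koopman_apply (φ : C(X, X)) (f : C(X, ℝ)) : koopman φ f = f.comp φ :=
  rfl

theorem koopman_pow_apply (φ : C(X, X)) (n : ℕ) (f : C(X, ℝ)) (ω : X) :
    (koopman φ ^ n) f ω = f (φ^[n] ω) := by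
  induction n generalizing ω with
  | zero => rfl
  | succ n ih => rw [pow_succ', Module.End.mul_apply, Function.iterate_succ_apply, ← ih]; rfl

/-- The averaging operators of `φ`: the convex combinations of powers of the Koopman operator. -/
def koopmanHull (φ : C(X, X)) : Set (Module.End ℝ C(X, ℝ)) :=
  convexHull ℝ (Set.range fun n : ℕ ↦ koopman φ ^ n)

variable {A : Module.End ℝ C(X, ℝ)}

theorem map_mem_of_mem_koopmanHull (hA : A ∈ koopmanHull φ) (f : C(X, ℝ)) {E : Type*}
    [AddCommGroup E] [Module ℝ E] (ℓ : C(X, ℝ) →ₗ[ℝ] E) {s : Set E} (hs : Convex ℝ s)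
    (h : ∀ n, ℓ ((koopman φ ^ n) f) ∈ s) : ℓ (A f) ∈ s :=
  convexHull_min (t := (ℓ ∘ₗ LinearMap.applyₗ f) ⁻¹' s) (Set.range_subset_iff.2 h)
    (hs.linear_preimage _) hA

theorem apply_mem_of_mem_koopmanHull (hA : A ∈ koopmanHull φ) {f : C(X, ℝ)} {ω : X} {s : Set ℝ}
    (hs : Convex ℝ s) (h : ∀ n, f (φ^[n] ω) ∈ s) : A f ω ∈ s :=
  map_mem_of_mem_koopmanHull hA f (ContinuousMap.evalCLM ℝ ω).toLinearMap hs
    fun n ↦ (koopman_pow_apply φ n f ω).symm ▸ h n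

theorem apply_sub_apply_mem_of_mem_koopmanHull (hA : A ∈ koopmanHull φ) {f : C(X, ℝ)} {a b : X}
    {s : Set ℝ} (hs : Convex ℝ s) (h : ∀ n, f (φ^[n] a) - f (φ^[n] b) ∈ s) :
    A f a - A f b ∈ s :=
  map_mem_of_mem_koopmanHull hA f
    ((ContinuousMap.evalCLM ℝ a).toLinearMap - (ContinuousMap.evalCLM ℝ b).toLinearMap) hs
    fun n ↦ by
      simpa [koopman_pow_apply] using h n

theorem norm_apply_le_of_mem_koopmanHull [CompactSpace X] (hA : A ∈ koopmanHull φ) (f : C(X, ℝ))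
    (ω : X) : ‖A f ω‖ ≤ ‖f‖ :=
  mem_closedBall_zero_iff.1 <| apply_mem_of_mem_koopmanHull hA (convex_closedBall 0 ‖f‖)
    fun _ ↦ mem_closedBall_zero_iff.2 (f.norm_coe_le_norm _)

theorem commute_koopman_of_mem_koopmanHull (hA : A ∈ koopmanHull φ) : Commute A (koopman φ) := by
  have h_hull : koopmanHull φ ⊆ Subalgebra.centralizer ℝ {koopman φ} := by
    refine convexHull_min (Set.range_subset_iff.2 fun n ↦ ?_) (Submodule.convex
      (Subalgebra.centralizer ℝ {koopman φ}).toSubmodule)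
    exact Set.mem_centralizer_iff.2 fun _ h ↦ h ▸ (Commute.self_pow _ n).eq
  exact (Set.mem_centralizer_iff.1 (h_hull hA) _ rfl).symm

theorem apply_comp_of_mem_koopmanHull (hA : A ∈ koopmanHull φ) (f : C(X, ℝ)) :
    A (f.comp φ) = (A f).comp φ :=
  LinearMap.congr_fun (commute_koopman_of_mem_koopmanHull hA).eq f

variable [CompactSpace X] [MeasurableSpace X] [BorelSpace X]

theorem integral_apply_of_mem_koopmanHull (hA : A ∈ koopmanHull φ) {ν : Measure X}
    [IsFiniteMeasure ν] (hν : MeasurePreserving φ ν ν) (f : C(X, ℝ)) :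
    ∫ ω, A f ω ∂ν = ∫ ω, f ω ∂ν := by
  have h_mem := map_mem_of_mem_koopmanHull hA f (pairing.flip ν.toSignedMeasure)
    (convex_singleton (∫ ω, f ω ∂ν)) fun n ↦ by
      simp only [LinearMap.flip_apply, pairing_apply, spair_toSignedMeasure, koopman_pow_apply,
        Set.mem_singleton_iff]
      conv_rhs => rw [← (hν.iterate n).map_eq]
      exact (integral_map (hν.iterate n).aemeasurable f.continuous.aestronglyMeasurable).symm
  simpa only [LinearMap.flip_apply, pairing_apply, spair_toSignedMeasure,
    Set.mem_singleton_iff] using h_mem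

theorem spair_iterate_Vop (φ : C(X, X)) (n : ℕ) (f : C(X, ℝ)) (μ : SignedMeasure X) :
    spair f ((Vop φ)^[n] μ) = spair ((koopman φ ^ n) f) μ := by
  induction n generalizing f with
  | zero => rfl
  | succ n ih =>
    rw [Function.iterate_succ_apply', spair_Vop, ← koopman_apply, ih, pow_succ,
      Module.End.mul_apply]

theorem exists_mem_koopmanHull_of_mem_convexHull_Vop {T : SignedMeasure X → SignedMeasure X}
    (hT : T ∈ convexHull ℝ (Set.range fun n : ℕ ↦ (Vop φ)^[n])) :
    ∃ A ∈ koopmanHull φ, ∀ (f : C(X, ℝ)) (μ : SignedMeasure X), spair f (T μ) = spair (A f) μ := by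
  let P : Set (SignedMeasure X → SignedMeasure X) :=
    {T | ∃ A ∈ koopmanHull φ, ∀ (f : C(X, ℝ)) μ, pairing f (T μ) = pairing (A f) μ}
  refine convexHull_min (t := P) (Set.range_subset_iff.2 fun n ↦ ?_) ?_ hT
  · exact ⟨_, subset_convexHull ℝ _ ⟨n, rfl⟩, spair_iterate_Vop φ n⟩
  · rintro T ⟨A, hA, hTA⟩ T' ⟨A', hA', hTA'⟩ a b ha hb hab
    refine ⟨a • A + b • A', convex_convexHull ℝ _ hA hA' ha hb hab, fun f μ ↦ ?_⟩
    simp only [Pi.add_apply, Pi.smul_apply, LinearMap.add_apply, LinearMap.smul_apply, map_add,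
      map_smul, hTA, hTA']

end Koopman

section ErgodicSequence

variable {X : Type*} [TopologicalSpace X]

/-- Ergodic sequences of operators from the convex hull of `{Vⁿ : n ≥ 0}`. -/
structure IsErgodicSeq [MeasurableSpace X] (φ : X → X)
    (T : ℕ → SignedMeasure X → SignedMeasure X) : Prop where
  mem_convexHull : ∀ k, T k ∈ convexHull ℝ (Set.range fun n : ℕ ↦ (Vop φ)^[n])
  tendsto_sub : ∀ (f : C(X, ℝ)) (μ : SignedMeasure X),
    Tendsto (fun k ↦ spair f (T k μ) - spair f (T k (Vop φ μ))) atTop (𝓝 0)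

/-- The predual notion of an ergodic sequence: averaging operators `A k` on `C(X, ℝ)` whose values
are asymptotically `φ`-invariant at every point. -/
structure IsErgodicAveraging (φ : C(X, X)) (A : ℕ → Module.End ℝ C(X, ℝ)) : Prop where
  mem_koopmanHull : ∀ k, A k ∈ koopmanHull φ
  tendsto_sub : ∀ f ω, Tendsto (fun k ↦ A k f ω - A k f (φ ω)) atTop (𝓝 0)

theorem IsErgodicSeq.exists_isErgodicAveraging [CompactSpace X] [MeasurableSpace X] [BorelSpace X]
    {φ : C(X, X)} {T : ℕ → SignedMeasure X → SignedMeasure X} (hT : IsErgodicSeq φ T) :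
    ∃ A, IsErgodicAveraging φ A ∧
      ∀ k (f : C(X, ℝ)) (μ : SignedMeasure X), spair f (T k μ) = spair (A k f) μ := by
  choose A hA hTA using fun k ↦ exists_mem_koopmanHull_of_mem_convexHull_Vop (hT.mem_convexHull k)
  refine ⟨A, ⟨hA, fun f ω ↦ ?_⟩, hTA⟩
  simpa only [Vop_diracSM φ.continuous.measurable, hTA, spair_diracSM] using
    hT.tendsto_sub f (diracSM ω)

theorem IsErgodicAveraging.tendsto_sub_iterate {φ : C(X, X)} {A : ℕ → Module.End ℝ C(X, ℝ)}
    (hA : IsErgodicAveraging φ A) (f : C(X, ℝ)) (ω : X) (n : ℕ) :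
    Tendsto (fun k ↦ A k f ω - A k f (φ^[n] ω)) atTop (𝓝 0) := by
  induction n with
  | zero => simp
  | succ n ih =>
    simpa only [Function.iterate_succ_apply', sub_add_sub_cancel, add_zero] using
      ih.add (hA.tendsto_sub f (φ^[n] ω))

end ErgodicSequence

section LimitMeasure

variable {X : Type*} [TopologicalSpace X] [MeasurableSpace X] {φ : C(X, X)}
  {A : ℕ → Module.End ℝ C(X, ℝ)} {l : Filter ℕ} [l.NeBot] {ω : X} {ν : Measure X}

theorem isProbabilityMeasure_of_tendsto_integral (hA : ∀ k, A k ∈ koopmanHull φ)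
    (hν : ∀ f, Tendsto (fun k ↦ A k f ω) l (𝓝 (∫ z, f z ∂ν))) : IsProbabilityMeasure ν := by
  have h_one (k) : A k 1 ω = 1 :=
    apply_mem_of_mem_koopmanHull (hA k) (convex_singleton 1) fun n ↦ rfl
  have h_integral : ∫ z, (1 : C(X, ℝ)) z ∂ν = 1 :=
    tendsto_nhds_unique (hν 1) (tendsto_const_nhds.congr fun k ↦ (h_one k).symm)
  simpa [isProbabilityMeasure_iff_real] using h_integral

variable [BorelSpace X] [IsFiniteMeasure ν]

theorem IsErgodicAveraging.measurePreserving [HasOuterApproxClosed X]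
    (hA : IsErgodicAveraging φ A) (hl : l ≤ atTop)
    (hν : ∀ f, Tendsto (fun k ↦ A k f ω) l (𝓝 (∫ z, f z ∂ν))) : MeasurePreserving φ ν ν := by
  refine ⟨φ.continuous.measurable, ext_of_forall_integral_eq_of_IsFiniteMeasure fun f ↦ ?_⟩
  rw [integral_map φ.continuous.aemeasurable f.continuous.aestronglyMeasurable]
  have h_comp := hν (f.toContinuousMap.comp φ)
  simp only [apply_comp_of_mem_koopmanHull (hA.mem_koopmanHull _)] at h_comp
  have h_sub := (hν f.toContinuousMap).sub h_comp
  exact (sub_eq_zero.1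
    (tendsto_nhds_unique h_sub ((hA.tendsto_sub f.toContinuousMap ω).mono_left hl))).symm

variable [CompactSpace X]

theorem ae_mem_orbitClosure_of_tendsto_integral [TopologicalSpace.PseudoMetrizableSpace X]
    (hA : ∀ k, A k ∈ koopmanHull φ)
    (hν : ∀ f, Tendsto (fun k ↦ A k f ω) l (𝓝 (∫ z, f z ∂ν))) :
    ∀ᵐ z ∂ν, z ∈ orbitClosure φ ω := by
  let _ := TopologicalSpace.pseudoMetrizableSpacePseudoMetric X
  let f : C(X, ℝ) := ⟨fun z ↦ Metric.infDist z (orbitClosure φ ω), Metric.continuous_infDist_pt _⟩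
  have h_zero (k) : A k f ω = 0 := apply_mem_of_mem_koopmanHull (hA k) (convex_singleton 0)
    fun n ↦ Metric.infDist_zero_of_mem (iterate_mem_orbitClosure φ ω n)
  have h_integral : ∫ z, f z ∂ν = 0 :=
    tendsto_nhds_unique (hν f) (tendsto_const_nhds.congr fun k ↦ (h_zero k).symm)
  have h_nonneg : 0 ≤ (f : X → ℝ) := fun _ ↦ Metric.infDist_nonneg
  filter_upwards [(integral_eq_zero_iff_of_nonneg h_nonneg (integrable_continuousMap f ν)).1
    h_integral] with z hz
  exact (isClosed_closure.mem_iff_infDist_zero ⟨ω, iterate_mem_orbitClosure φ ω 0⟩).2 hz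

theorem exists_measure_forall_integral_eq_of_tendsto [T2Space X] {ι : Type*} {l : Filter ι}
    [l.NeBot] {Λ : ι → C(X, ℝ) →ₗ[ℝ] ℝ} {L : C(X, ℝ) → ℝ}
    (hΛ : ∀ i f, (∀ ω, 0 ≤ f ω) → 0 ≤ Λ i f) (hL : ∀ f, Tendsto (fun i ↦ Λ i f) l (𝓝 (L f))) :
    ∃ ν : Measure X, IsFiniteMeasure ν ∧ ∀ f : C(X, ℝ), ∫ ω, f ω ∂ν = L f := by
  let L' : C(X, ℝ) →ₗ[ℝ] ℝ := linearMapOfTendsto L Λ (tendsto_pi_nhds.2 hL)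
  let R : CompactlySupportedContinuousMap X ℝ →ₚ[ℝ] ℝ := PositiveLinearMap.mk₀
    { toFun g := L' g.toContinuousMap
      map_add' _ _ := map_add L' _ _
      map_smul' _ _ := map_smul L' _ _ }
    fun g hg ↦ ge_of_tendsto' (hL _) fun i ↦ hΛ i _ hg
  exact ⟨RealRMK.rieszMeasure R, inferInstance, fun f ↦ RealRMK.integral_rieszMeasure R
    ⟨f, .of_compactSpace f⟩⟩

theorem exists_tendsto_integral_of_ultrafilter [T2Space X] (hA : ∀ k, A k ∈ koopmanHull φ) (ω : X)
    (U : Ultrafilter ℕ) : ∃ ν : Measure X, IsFiniteMeasure ν ∧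
      ∀ f, Tendsto (fun k ↦ A k f ω) U (𝓝 (∫ z, f z ∂ν)) := by
  have h_lim (f : C(X, ℝ)) : ∃ c, Tendsto (fun k ↦ A k f ω) U (𝓝 c) := by
    obtain ⟨c, -, hc⟩ := (isCompact_closedBall (0 : ℝ) ‖f‖).ultrafilter_le_nhds'
      (U.map fun k ↦ A k f ω) (mem_map.2 <| univ_mem' fun k ↦
        mem_closedBall_zero_iff.2 (norm_apply_le_of_mem_koopmanHull (hA k) f ω))
    exact ⟨c, hc⟩
  choose L hL using h_lim
  obtain ⟨ν, hν, hνL⟩ := exists_measure_forall_integral_eq_of_tendsto (l := (U : Filter ℕ))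
    (Λ := fun k ↦ (ContinuousMap.evalCLM ℝ ω).toLinearMap ∘ₗ A k)
    (fun k f hf ↦ apply_mem_of_mem_koopmanHull (hA k) (convex_Ici 0) fun n ↦ hf _) hL
  exact ⟨ν, hν, fun f ↦ hνL f ▸ hL f⟩

end LimitMeasure

section OrbitMetric

variable {X : Type*} [PseudoMetricSpace X]

/-- The set `B` has diameter at most `ε` for the orbit metric `sup_n d(φⁿ a, φⁿ b)`. -/
def OrbitDiamLE (φ : X → X) (ε : ℝ) (B : Set X) : Prop :=
  ∀ a ∈ B, ∀ b ∈ B, ∀ n, dist (φ^[n] a) (φ^[n] b) ≤ ε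

/-- Separability of the orbit metric `sup_n d(φⁿ a, φⁿ b)`, in the form: for every `ε` the space is
a countable union of closed sets of orbit diameter at most `ε`. -/
def OrbitSeparable (φ : X → X) : Prop :=
  ∀ ε > 0, ∃ S : Set (Set X),
    S.Countable ∧ (∀ B ∈ S, IsClosed B ∧ OrbitDiamLE φ ε B) ∧ ⋃₀ S = Set.univ

-- The orbit of `B` shadows `m` during a thick set of times, and some return time of `B` is one of
-- these; so `B` is within `3 ε` of `m`.
theorem measure_eq_zero_of_orbitDiamLE [MeasurableSpace X] {φ : C(X, X)} {ν : Measure X}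
    [IsFiniteMeasure ν] {m : Set X} (hν : MeasurePreserving φ ν ν) (hφm : Set.MapsTo φ m m)
    {B : Set X} (hB : MeasurableSet B) {ε : ℝ} (hε : 0 < ε) (hBε : OrbitDiamLE φ ε B) {ω : X}
    (hω : ω ∈ B) (hωm : (m ∩ orbitClosure φ ω).Nonempty) (h_far : 3 * ε < Metric.infDist ω m) :
    ν B = 0 := by
  by_contra hB₀
  obtain ⟨y, hym, hy⟩ := hωm
  have h_thick : IsThick {n | Metric.infDist (φ^[n] ω) m < ε} :=
    isThick_setOf_iterate_mem φ.continuous hy (U := {z | Metric.infDist z m < ε})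
      (isOpen_lt (Metric.continuous_infDist_pt m) continuous_const) fun j ↦ by
        rwa [Set.mem_ofPred_eq, Metric.infDist_zero_of_mem (hφm.iterate j hym)]
  obtain ⟨d, hd, u, hu, hdu⟩ := exists_nonempty_inter_preimage_iterate_of_isThick hν hB hB₀ h_thick
  have h_near : Metric.infDist ω m ≤ 3 * ε :=
    calc Metric.infDist ω m ≤ Metric.infDist (φ^[d] ω) m + dist ω (φ^[d] ω) :=
          Metric.infDist_le_infDist_add_dist
      _ ≤ Metric.infDist (φ^[d] ω) m + (dist ω (φ^[d] u) + dist (φ^[d] u) (φ^[d] ω)) := by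
          gcongr; exact dist_triangle _ _ _
      _ ≤ ε + (ε + ε) := by
          gcongr
          exacts [le_of_lt hd, hBε ω hω _ hdu 0, hBε u hu ω hω d]
      _ = 3 * ε := by ring
  exact h_far.not_ge h_near

theorem ae_mem_of_ae_nonempty_inter_orbitClosure [MeasurableSpace X] [BorelSpace X]
    {φ : C(X, X)} (hφ : OrbitSeparable φ) {ν : Measure X} [IsFiniteMeasure ν] {m : Set X}
    (hν : MeasurePreserving φ ν ν) (hm : IsClosed m) (hm_ne : m.Nonempty) (hφm : Set.MapsTo φ m m)
    (h : ∀ᵐ ω ∂ν, (m ∩ orbitClosure φ ω).Nonempty) : ∀ᵐ ω ∂ν, ω ∈ m := by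
  have h_near (ε : ℝ) (hε : 0 < ε) : ∀ᵐ ω ∂ν, Metric.infDist ω m ≤ 3 * ε := by
    obtain ⟨S, hS, hSB, hS_univ⟩ := hφ ε hε
    have h_null : ∀ᵐ ω ∂ν, ∀ B ∈ S, ν B = 0 → ω ∉ B := (ae_ball_iff hS).2 fun B _ ↦ by
      by_cases hB : ν B = 0
      · simpa [hB] using measure_eq_zero_iff_ae_notMem.1 hB
      · simp [hB]
    filter_upwards [h_null, h] with ω hω hωm
    obtain ⟨B, hB, hωB⟩ := hS_univ.ge (Set.mem_univ ω)
    by_contra! h_far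
    exact hω B hB (measure_eq_zero_of_orbitDiamLE hν hφm (hSB B hB).1.measurableSet hε
      (hSB B hB).2 hωB hωm h_far) hωB
  have h_seq := ae_all_iff.2 fun n : ℕ ↦ h_near (1 / (n + 1)) Nat.one_div_pos_of_nat
  filter_upwards [h_seq] with ω hω
  refine (hm.mem_iff_infDist_zero hm_ne).2 (le_antisymm (ge_of_tendsto' (x := atTop) ?_ hω)
    Metric.infDist_nonneg)
  simpa using (tendsto_one_div_add_atTop_nhds_zero_nat (𝕜 := ℝ)).const_mul 3

theorem ae_mem_of_existsUnique_isMinimalSet [MeasurableSpace X] [BorelSpace X] {φ : C(X, X)}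
    (hφ : OrbitSeparable φ) (hmin : ∀ ω, ∃! m, IsMinimalSet φ m ∧ m ⊆ orbitClosure φ ω)
    {m : Set X} (hm : IsMinimalSet φ m) {ω : X} (hmω : m ⊆ orbitClosure φ ω) {ν : Measure X}
    [IsFiniteMeasure ν] (hν : MeasurePreserving φ ν ν) (hνω : ∀ᵐ z ∂ν, z ∈ orbitClosure φ ω) :
    ∀ᵐ z ∂ν, z ∈ m := by
  refine ae_mem_of_ae_nonempty_inter_orbitClosure hφ hν hm.2.1 hm.1 hm.2.2.1 ?_
  filter_upwards [hνω] with z hz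
  obtain ⟨m', ⟨hm', hm'z⟩, -⟩ := hmin z
  have hm'ω : m' ⊆ orbitClosure φ ω :=
    hm'z.trans (orbitClosure_subset isClosed_closure (mapsTo_orbitClosure φ.continuous ω) hz)
  obtain rfl : m' = m := (hmin ω).unique ⟨hm', hm'ω⟩ ⟨hm, hmω⟩
  exact hm'.1.mono (Set.subset_inter subset_rfl hm'z)

variable [CompactSpace X] {φ : C(X, X)}

-- `ω ↦ (p ↦ p ω)` embeds `X` with its orbit metric into the separable space `C(E(X, φ), X)`.
theorem orbitSeparable_of_metrizableSpace_EllisE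
    (hE : TopologicalSpace.MetrizableSpace (EllisE φ)) : OrbitSeparable φ := by
  intro ε hε
  have : CompactSpace (EllisE φ) := isCompact_iff_compactSpace.1 isClosed_closure.isCompact
  let eval (ω : X) : C(EllisE φ, X) :=
    ⟨fun p ↦ p.1 ω, (continuous_apply ω).comp continuous_subtype_val⟩
  let iter (n : ℕ) : EllisE φ := ⟨φ^[n], subset_closure ⟨n, rfl⟩⟩
  let ball (c : C(EllisE φ, X)) : Set X := {ω | ∀ n, dist (φ^[n] ω) (c (iter n)) ≤ ε / 2}
  obtain ⟨D, hD, hD_dense⟩ := TopologicalSpace.exists_countable_dense C(EllisE φ, X)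
  refine ⟨ball '' D, hD.image ball, Set.forall_mem_image.2 fun c _ ↦ ⟨?_, fun a ha b hb n ↦ ?_⟩,
    Set.eq_univ_of_forall fun ω ↦ ?_⟩
  · simp only [ball, Set.ofPred_forall]
    exact isClosed_iInter fun n ↦
      isClosed_le ((φ.continuous.iterate n).dist continuous_const) continuous_const
  · linarith [dist_triangle_right (φ^[n] a) (φ^[n] b) (c (iter n)), ha n, hb n]
  · obtain ⟨c, hcD, hc⟩ := hD_dense.exists_dist_lt (eval ω) (half_pos hε)
    exact ⟨ball c, ⟨c, hcD, rfl⟩, fun n ↦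
      (ContinuousMap.dist_apply_le_dist (f := eval ω) (iter n)).trans hc.le⟩

theorem IsMinimalSet.exists_iterate_dist_le {m : Set X} (hm : IsMinimalSet φ m)
    (hφ : OrbitSeparable φ) {a b : X} (ha : a ∈ m) (hb : b ∈ m) {ε : ℝ} (hε : 0 < ε) :
    ∃ p q, ∀ n, dist (φ^[n] (φ^[p] a)) (φ^[n] (φ^[q] b)) ≤ ε := by
  obtain ⟨S, hS, hSB, hS_univ⟩ := hφ ε hε
  have : CompactSpace m := isCompact_iff_compactSpace.1 hm.2.1.isCompact
  have : Nonempty m := hm.1.to_subtype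
  have : Countable S := hS.to_subtype
  obtain ⟨⟨B, hB⟩, z, hz⟩ := nonempty_interior_of_iUnion_of_closed
    (f := fun B : S ↦ ((↑) ⁻¹' (B : Set X) : Set m))
    (fun B ↦ (hSB B B.2).1.preimage continuous_subtype_val)
    (by rw [← Set.preimage_iUnion, ← Set.sUnion_eq_iUnion, hS_univ, Set.preimage_univ])
  obtain ⟨O, hO, hzO, hOB⟩ : ∃ O, IsOpen O ∧ (z : X) ∈ O ∧ O ∩ m ⊆ B := by
    obtain ⟨O, hO, hO_eq⟩ := isOpen_induced_iff.1 (isOpen_interior (s := ((↑) ⁻¹' B : Set m)))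
    refine ⟨O, hO, hO_eq.ge hz, fun c hc ↦ ?_⟩
    have hc_int : (⟨c, hc.2⟩ : m) ∈ interior ((↑) ⁻¹' B : Set m) := hO_eq ▸ hc.1
    exact (interior_subset hc_int : (⟨c, hc.2⟩ : m) ∈ ((↑) ⁻¹' B : Set m))
  have h_enters (c : X) (hc : c ∈ m) : ∃ p, φ^[p] c ∈ B := by
    have hzc : (z : X) ∈ orbitClosure φ c := (hm.orbitClosure_eq φ.continuous hc).ge z.2
    obtain ⟨_, hpO, p, rfl⟩ := mem_closure_iff.1 hzc O hO hzO
    exact ⟨p, hOB ⟨hpO, hm.2.2.1.iterate p hc⟩⟩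
  obtain ⟨p, hp⟩ := h_enters a ha
  obtain ⟨q, hq⟩ := h_enters b hb
  exact ⟨p, q, (hSB B hB).2 _ hp _ hq⟩

theorem IsErgodicAveraging.tendsto_sub_of_exists_iterate_dist_le {A : ℕ → Module.End ℝ C(X, ℝ)}
    (hA : IsErgodicAveraging φ A) {a b : X}
    (h : ∀ ε > 0, ∃ p q, ∀ n, dist (φ^[n] (φ^[p] a)) (φ^[n] (φ^[q] b)) ≤ ε) (f : C(X, ℝ)) :
    Tendsto (fun k ↦ A k f a - A k f b) atTop (𝓝 0) := by
  refine Metric.tendsto_nhds.2 fun ε hε ↦ ?_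
  obtain ⟨δ, hδ, hfδ⟩ := Metric.uniformContinuous_iff.1
    (CompactSpace.uniformContinuous_of_continuous f.continuous) (ε / 2) (half_pos hε)
  obtain ⟨p, q, hpq⟩ := h (δ / 2) (half_pos hδ)
  have h_iterates (k) : A k f (φ^[p] a) - A k f (φ^[q] b) ∈ Metric.closedBall 0 (ε / 2) := by
    refine apply_sub_apply_mem_of_mem_koopmanHull (hA.mem_koopmanHull k)
      (convex_closedBall _ _) fun n ↦ mem_closedBall_zero_iff.2 ?_
    exact (hfδ ((hpq n).trans_lt (half_lt_self hδ))).le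
  have h_error := (hA.tendsto_sub_iterate f a p).sub (hA.tendsto_sub_iterate f b q)
  rw [sub_zero] at h_error
  filter_upwards [Metric.tendsto_nhds.1 h_error (ε / 2) (half_pos hε)] with k hk
  have h_split : A k f a - A k f b = (A k f (φ^[p] a) - A k f (φ^[q] b)) +
      (A k f a - A k f (φ^[p] a) - (A k f b - A k f (φ^[q] b))) := by ring
  rw [dist_zero_right] at hk ⊢
  rw [h_split, ← add_halves ε]
  exact (norm_add_le _ _).trans_lt
    (add_lt_add_of_le_of_lt (mem_closedBall_zero_iff.1 (h_iterates k)) hk)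

variable [MeasurableSpace X] [BorelSpace X]

theorem IsMinimalSet.tendsto_integral {m : Set X} (hm : IsMinimalSet φ m) (hφ : OrbitSeparable φ)
    {A : ℕ → Module.End ℝ C(X, ℝ)} (hA : IsErgodicAveraging φ A) {ν : Measure X}
    [IsProbabilityMeasure ν] (hν : MeasurePreserving φ ν ν) (hνm : ∀ᵐ ω ∂ν, ω ∈ m) {b : X}
    (hb : b ∈ m) (f : C(X, ℝ)) :
    Tendsto (fun k ↦ A k f b) atTop (𝓝 (∫ ω, f ω ∂ν)) := by
  have h_sub : Tendsto (fun k ↦ ∫ ω, (A k f b - A k f ω) ∂ν) atTop (𝓝 (∫ _, 0 ∂ν)) := by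
    refine tendsto_integral_of_dominated_convergence (fun _ ↦ ‖f‖ + ‖f‖)
      (fun k ↦ (continuous_const.sub (A k f).continuous).aestronglyMeasurable)
      (integrable_const _) (fun k ↦ Eventually.of_forall fun ω ↦ ?_) ?_
    · exact norm_sub_le_of_le (norm_apply_le_of_mem_koopmanHull (hA.mem_koopmanHull k) f b)
        (norm_apply_le_of_mem_koopmanHull (hA.mem_koopmanHull k) f ω)
    · filter_upwards [hνm] with ω hω
      exact hA.tendsto_sub_of_exists_iterate_dist_le
        (fun ε hε ↦ hm.exists_iterate_dist_le hφ hb hω hε) f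
  have h_integral (k) : ∫ ω, (A k f b - A k f ω) ∂ν = A k f b - ∫ ω, f ω ∂ν := by
    rw [integral_sub (integrable_const _) (integrable_continuousMap _ ν), integral_const,
      integral_apply_of_mem_koopmanHull (hA.mem_koopmanHull k) hν, probReal_univ, one_smul]
  simpa only [h_integral, integral_zero, tendsto_sub_nhds_zero_iff] using h_sub

end OrbitMetric

theorem IsErgodicAveraging.exists_tendsto_apply {X : Type*} [MetricSpace X] [CompactSpace X]
    [MeasurableSpace X] [BorelSpace X] {φ : C(X, X)} {A : ℕ → Module.End ℝ C(X, ℝ)}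
    (hA : IsErgodicAveraging φ A) (hφ : OrbitSeparable φ)
    (hmin : ∀ ω, ∃! m, IsMinimalSet φ m ∧ m ⊆ orbitClosure φ ω) (f : C(X, ℝ)) (ω : X) :
    ∃ c, Tendsto (fun k ↦ A k f ω) atTop (𝓝 c) := by
  obtain ⟨m, ⟨hm, hmω⟩, -⟩ := hmin ω
  obtain ⟨b, hb⟩ := hm.1
  have h_ultrafilter (U : Ultrafilter ℕ) (hU : (U : Filter ℕ) ≤ atTop) :
      ∃ c, Tendsto (fun k ↦ A k f ω) U (𝓝 c) ∧ Tendsto (fun k ↦ A k f b) atTop (𝓝 c) := by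
    obtain ⟨ν, _, hν⟩ := exists_tendsto_integral_of_ultrafilter hA.mem_koopmanHull ω U
    have := isProbabilityMeasure_of_tendsto_integral hA.mem_koopmanHull hν
    have hν_inv := hA.measurePreserving hU hν
    have hνm := ae_mem_of_existsUnique_isMinimalSet hφ hmin hm hmω hν_inv
      (ae_mem_orbitClosure_of_tendsto_integral hA.mem_koopmanHull hν)
    exact ⟨_, hν f, hm.tendsto_integral hφ hA hν_inv hνm hb f⟩
  obtain ⟨c, -, hc⟩ := h_ultrafilter (.of atTop) (Ultrafilter.of_le atTop)
  refine ⟨c, (tendsto_iff_ultrafilter _ _ _).2 fun U hU ↦ ?_⟩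
  obtain ⟨c', hc'ω, hc'⟩ := h_ultrafilter U hU
  rwa [tendsto_nhds_unique hc hc']

section WeakStarLimit

variable {X : Type*} [TopologicalSpace X] [CompactSpace X] [T2Space X] [MeasurableSpace X]
  [BorelSpace X] {φ : C(X, X)} {A : ℕ → Module.End ℝ C(X, ℝ)}

theorem exists_measure_tendsto_integral_apply (hA : ∀ k, A k ∈ koopmanHull φ)
    (hlim : ∀ f ω, ∃ c, Tendsto (fun k ↦ A k f ω) atTop (𝓝 c)) (p : Measure X)
    [IsFiniteMeasure p] : ∃ r : Measure X, IsFiniteMeasure r ∧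
      ∀ f, Tendsto (fun k ↦ ∫ ω, A k f ω ∂p) atTop (𝓝 (∫ ω, f ω ∂r)) := by
  choose g hg using hlim
  have h_tendsto (f : C(X, ℝ)) :
      Tendsto (fun k ↦ ∫ ω, A k f ω ∂p) atTop (𝓝 (∫ ω, g f ω ∂p)) :=
    tendsto_integral_of_dominated_convergence (fun _ ↦ ‖f‖)
      (fun k ↦ (A k f).continuous.aestronglyMeasurable) (integrable_const _)
      (fun k ↦ Eventually.of_forall (norm_apply_le_of_mem_koopmanHull (hA k) f))
      (Eventually.of_forall (hg f))
  obtain ⟨r, hr, hrg⟩ := exists_measure_forall_integral_eq_of_tendsto (l := atTop)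
    (Λ := fun k ↦ pairing.flip p.toSignedMeasure ∘ₗ A k) (L := fun f ↦ ∫ ω, g f ω ∂p)
    (fun k f hf ↦ by
      simp only [LinearMap.comp_apply, LinearMap.flip_apply, pairing_apply, spair_toSignedMeasure]
      exact integral_nonneg fun ω ↦
        apply_mem_of_mem_koopmanHull (hA k) (convex_Ici 0) fun n ↦ hf (φ^[n] ω))
    (by simpa [spair_toSignedMeasure] using h_tendsto)
  exact ⟨r, hr, fun f ↦ hrg f ▸ h_tendsto f⟩

theorem exists_tendsto_spair_apply (hA : ∀ k, A k ∈ koopmanHull φ)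
    (hlim : ∀ f ω, ∃ c, Tendsto (fun k ↦ A k f ω) atTop (𝓝 c)) (μ : SignedMeasure X) :
    ∃ η : SignedMeasure X, ∀ f : C(X, ℝ),
      Tendsto (fun k ↦ spair (A k f) μ) atTop (𝓝 (spair f η)) := by
  obtain ⟨p, q, _, _, rfl⟩ := exists_eq_toSignedMeasure_sub μ
  obtain ⟨r, _, hr⟩ := exists_measure_tendsto_integral_apply hA hlim p
  obtain ⟨s, _, hs⟩ := exists_measure_tendsto_integral_apply hA hlim q
  refine ⟨r.toSignedMeasure - s.toSignedMeasure, fun f ↦ ?_⟩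
  simpa only [spair_toSignedMeasure_sub] using (hr f).sub (hs f)

end WeakStarLimit

theorem IsErgodicSeq.exists_tendsto_spair {X : Type*} [MetricSpace X] [CompactSpace X]
    [MeasurableSpace X] [BorelSpace X] {φ : C(X, X)} {T : ℕ → SignedMeasure X → SignedMeasure X}
    (hT : IsErgodicSeq φ T) (hφ : OrbitSeparable φ)
    (hmin : ∀ ω, ∃! m, IsMinimalSet φ m ∧ m ⊆ orbitClosure φ ω) :
    ∃ S : SignedMeasure X → SignedMeasure X, ∀ (f : C(X, ℝ)) (μ : SignedMeasure X),
      Tendsto (fun k ↦ spair f (T k μ)) atTop (𝓝 (spair f (S μ))) := by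
  obtain ⟨A, hA, hTA⟩ := hT.exists_isErgodicAveraging
  choose S hS using exists_tendsto_spair_apply hA.mem_koopmanHull (hA.exists_tendsto_apply hφ hmin)
  exact ⟨S, fun f μ ↦ by simpa only [hTA] using hS μ f⟩

section Divergence

variable {X : Type*} [TopologicalSpace X] [CompactSpace X] [MeasurableSpace X] [BorelSpace X]

theorem spair_windowAverage (f : C(X, ℝ)) (T : ℕ → SignedMeasure X → SignedMeasure X) (N s : ℕ)
    (μ : SignedMeasure X) :
    spair f (windowAverage T N s μ) = windowAverage (fun n ↦ spair f (T n μ)) N s := by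
  rw [show windowAverage T N s μ = windowAverage (fun n ↦ T n μ) N s from
    map_windowAverage (LinearMap.proj (φ := fun _ ↦ SignedMeasure X) μ) T N s, ← pairing_apply]
  exact map_windowAverage (pairing f) _ N s

theorem isErgodicSeq_windowAverage (φ : C(X, X)) (s : ℕ → ℕ) :
    IsErgodicSeq φ fun k ↦ windowAverage (fun n ↦ (Vop φ)^[n]) (k + 1) (s k) where
  mem_convexHull k := windowAverage_mem (convex_convexHull ℝ _) k.succ_ne_zero
    fun j _ ↦ subset_convexHull ℝ _ ⟨s k + j, rfl⟩
  tendsto_sub f μ := by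
    have h_bound (n) (ω : X) : |(koopman φ ^ n) f ω| ≤ ‖f‖ := by
      rw [koopman_pow_apply]
      exact f.norm_coe_le_norm _
    simp only [spair_windowAverage, ← Function.iterate_succ_apply]
    exact tendsto_windowAverage_sub_windowAverage_succ
      (fun n ↦ (spair_iterate_Vop φ n f μ).symm ▸ abs_spair_le (h_bound n) μ) s

theorem IsMinimalSet.eq_of_forall_isErgodicSeq [NormalSpace X] {φ : C(X, X)}
    (h : ∀ T, IsErgodicSeq φ T → ∃ S : SignedMeasure X → SignedMeasure X,
      ∀ (f : C(X, ℝ)) μ, Tendsto (fun k ↦ spair f (T k μ)) atTop (𝓝 (spair f (S μ))))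
    {ω : X} {m m' : Set X} (hm : IsMinimalSet φ m) (hm' : IsMinimalSet φ m')
    (hmω : m ⊆ orbitClosure φ ω) (hm'ω : m' ⊆ orbitClosure φ ω) : m = m' := by
  by_contra hne
  obtain ⟨f, hf₀, hf₁, -⟩ := exists_continuous_zero_one_of_isClosed hm.2.1 hm'.2.1
    (hm.disjoint_of_ne hm' φ.continuous hne)
  have h_thick {m : Set X} (hm : IsMinimalSet φ m) (hmω : m ⊆ orbitClosure φ ω) {I : Set ℝ}
      (hI : IsOpen I) (hfI : ∀ y ∈ m, f y ∈ I) : IsThick {n | f (φ^[n] ω) ∈ I} := by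
    obtain ⟨y, hy⟩ := hm.1
    exact isThick_setOf_iterate_mem φ.continuous (hmω hy) (hI.preimage f.continuous)
      fun j ↦ hfI _ (hm.2.2.1.iterate j hy)
  have h_low : IsThick {n | f (φ^[n] ω) ≤ 1 / 3} :=
    (h_thick hm hmω (isOpen_Iio (a := 1 / 3)) fun y hy ↦ by simp [hf₀ hy]).mono
      (Set.ofPred_subset_ofPred.2 fun _ hn ↦ (Set.mem_Iio.1 hn).le)
  have h_high : IsThick {n | 2 / 3 ≤ f (φ^[n] ω)} :=
    (h_thick hm' hm'ω (isOpen_Ioi (a := 2 / 3)) fun y hy ↦ by norm_num [hf₁ hy]).mono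
      (Set.ofPred_subset_ofPred.2 fun _ hn ↦ (Set.mem_Ioi.1 hn).le)
  have h_dirac (n) : spair f ((Vop φ)^[n] (diracSM ω)) = f (φ^[n] ω) := by
    rw [spair_iterate_Vop, spair_diracSM, koopman_pow_apply]
  have h_conv (s : ℕ → ℕ) :
      ∃ l, Tendsto (fun k ↦ windowAverage (fun n ↦ f (φ^[n] ω)) (k + 1) (s k)) atTop (𝓝 l) := by
    obtain ⟨S, hS⟩ := h _ (isErgodicSeq_windowAverage φ s)
    exact ⟨_, by simpa only [spair_windowAverage, h_dirac] using hS f (diracSM ω)⟩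
  linarith [le_of_isThick_of_tendsto_windowAverage h_low h_high h_conv]

end Divergence

/-- Theorem 3.5: for an ordinary semicascade, all ergodic operator sequences from the convex
hull of `{Vⁿ : n ≥ 0}` converge in the weak* operator topology iff the orbit closure of every
point contains exactly one minimal set. -/
theorem stmt_15 (φ : Ω → Ω) (hφ : Continuous φ)
    (hmet : TopologicalSpace.MetrizableSpace (EllisE φ)) :
    (∀ T : ℕ → SignedMeasure Ω → SignedMeasure Ω,
      (∀ k, T k ∈ convexHull ℝ (Set.range fun n : ℕ => (Vop φ)^[n])) →
      (∀ (x : C(Ω, ℝ)) (μ : SignedMeasure Ω),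
        Tendsto (fun k => spair (⇑x) (T k μ) - spair (⇑x) (T k (Vop φ μ))) atTop (𝓝 0)) →
      ∃ S : SignedMeasure Ω → SignedMeasure Ω, ∀ (x : C(Ω, ℝ)) (μ : SignedMeasure Ω),
        Tendsto (fun k => spair (⇑x) (T k μ)) atTop (𝓝 (spair (⇑x) (S μ)))) ↔
    (∀ ω : Ω, ∃! m : Set Ω, IsMinimalSet φ m ∧ m ⊆ orbitClosure φ ω) := by
  let _ := TopologicalSpace.metrizableSpaceMetric Ω
  lift φ to C(Ω, Ω) using hφ
  constructor
  · intro h ω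
    obtain ⟨m, hm⟩ := exists_isMinimalSet_subset isClosed_closure
      ⟨ω, iterate_mem_orbitClosure φ ω 0⟩ (mapsTo_orbitClosure φ.continuous ω)
    exact ⟨m, hm, fun m' hm' ↦ IsMinimalSet.eq_of_forall_isErgodicSeq
      (fun T hT ↦ h T hT.mem_convexHull hT.tendsto_sub) hm'.1 hm.1 hm'.2 hm.2⟩
  · intro hmin T hT h_ergodic
    exact IsErgodicSeq.exists_tendsto_spair ⟨hT, h_ergodic⟩
      (orbitSeparable_of_metrizableSpace_EllisE hmet) hmin
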